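/- First step of diagonal-formula elimination: suppose ⊢^A Γ{[◇A⊥_Σ, Δ]} in the annotated nested sequent calculus for GL (with cuts on A), let B ∈ Σ, and suppose Δ contains no bracket annotated with B. Then there exists Σ' ⊆ Σ \ {B} such that ⊢^A Γ{[◇A⊥_{Σ'}, ◇B⊥, Δ]}. -/

import Mathlib

/-- Formulas of GL in negation normal form. -/
inductive Formula : Type where
  | pos : ℕ → Formula
  | neg : ℕ → Formula
  | and : Formula → Formula → Formula
  | or  : Formula → Formula → Formula
  | box : Formula → Formula
  | dia : Formula → Formula
deriving DecidableEq

/-- Negation `A⊥` of a formula, via De Morgan duality. -/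
def Formula.negate : Formula → Formula
  | .pos a => .neg a
  | .neg a => .pos a
  | .and A B => .or A.negate B.negate
  | .or A B => .and A.negate B.negate
  | .box A => .dia A.negate
  | .dia A => .box A.negate

/-- An element of a nested sequent: a formula or a nested (bracketed) sequent. -/
inductive SeqElem : Type where
  | fml : Formula → SeqElem
  | nest : List SeqElem → SeqElem

/-- A nested sequent. -/
abbrev Sequent := List SeqElem

/-- Unary contexts: a nested sequent with a single hole. -/
inductive Ctx : Type where
  | hole : Sequent → Ctx
  | nest : Sequent → Ctx → Ctx

/-- Fill the hole of a context with a sequent. -/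
def Ctx.fill : Ctx → Sequent → Sequent
  | .hole Δ, Γ => Δ ++ Γ
  | .nest Δ c, Γ => .nest (c.fill Γ) :: Δ

/-- Depth of a context: number of brackets surrounding the hole. -/
def Ctx.depth : Ctx → ℕ
  | .hole _ => 0
  | .nest _ c => c.depth + 1

/-- Equivalence of nested sequents up to (deep) exchange. -/
inductive SeqEquiv : Sequent → Sequent → Prop where
  | nil : SeqEquiv [] []
  | cons {e : SeqElem} {Γ Δ : Sequent} : SeqEquiv Γ Δ → SeqEquiv (e :: Γ) (e :: Δ)
  | consNest {Γ' Δ' Γ Δ : Sequent} :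
      SeqEquiv Γ' Δ' → SeqEquiv Γ Δ → SeqEquiv (.nest Γ' :: Γ) (.nest Δ' :: Δ)
  | swap (a b : SeqElem) (Γ : Sequent) : SeqEquiv (a :: b :: Γ) (b :: a :: Γ)
  | trans {Γ Δ Θ : Sequent} : SeqEquiv Γ Δ → SeqEquiv Δ Θ → SeqEquiv Γ Θ

/-- `DerivH n Γ`: `Γ` has a cut-free derivation of height at most `n`. -/
inductive DerivH : ℕ → Sequent → Prop where
  | id (n : ℕ) (c : Ctx) (a : ℕ) :
      DerivH n (c.fill [.fml (.pos a), .fml (.neg a)])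
  | and {n : ℕ} {c : Ctx} {A B : Formula} :
      DerivH n (c.fill [.fml A]) → DerivH n (c.fill [.fml B]) →
      DerivH (n + 1) (c.fill [.fml (.and A B)])
  | or {n : ℕ} {c : Ctx} {A B : Formula} :
      DerivH n (c.fill [.fml A, .fml B]) →
      DerivH (n + 1) (c.fill [.fml (.or A B)])
  | box {n : ℕ} {c : Ctx} {A : Formula} :
      DerivH n (c.fill [.nest [.fml (.dia A.negate), .fml A]]) →
      DerivH (n + 1) (c.fill [.fml (.box A)])
  | dia {n : ℕ} (c d : Ctx) {A : Formula} :
      0 < d.depth →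
      DerivH n (c.fill (d.fill [.fml A] ++ [.fml (.dia A)])) →
      DerivH (n + 1) (c.fill (d.fill [] ++ [.fml (.dia A)]))
  | exch {n : ℕ} {Γ Δ : Sequent} : SeqEquiv Γ Δ → DerivH n Γ → DerivH n Δ
  | up {n : ℕ} {Γ : Sequent} : DerivH n Γ → DerivH (n + 1) Γ

/-- Derivability where cut is permitted on formulas satisfying `P`. -/
inductive DerivWith (P : Formula → Prop) : Sequent → Prop where
  | id (c : Ctx) (a : ℕ) :
      DerivWith P (c.fill [.fml (.pos a), .fml (.neg a)])
  | and {c : Ctx} {A B : Formula} :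
      DerivWith P (c.fill [.fml A]) → DerivWith P (c.fill [.fml B]) →
      DerivWith P (c.fill [.fml (.and A B)])
  | or {c : Ctx} {A B : Formula} :
      DerivWith P (c.fill [.fml A, .fml B]) →
      DerivWith P (c.fill [.fml (.or A B)])
  | box {c : Ctx} {A : Formula} :
      DerivWith P (c.fill [.nest [.fml (.dia A.negate), .fml A]]) →
      DerivWith P (c.fill [.fml (.box A)])
  | dia (c d : Ctx) {A : Formula} :
      0 < d.depth →
      DerivWith P (c.fill (d.fill [.fml A] ++ [.fml (.dia A)])) →
      DerivWith P (c.fill (d.fill [] ++ [.fml (.dia A)]))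
  | cut {c : Ctx} {A : Formula} : P A →
      DerivWith P (c.fill [.fml A]) → DerivWith P (c.fill [.fml A.negate]) →
      DerivWith P (c.fill [])
  | exch {Γ Δ : Sequent} : SeqEquiv Γ Δ → DerivWith P Γ → DerivWith P Δ

/-- Cut-free derivability. -/
abbrev Deriv : Sequent → Prop := DerivWith (fun _ => False)
/-- Elements of an annotated nested sequent: ordinary formulas, diamond
formulas `◇A_Σ` annotated with a finite set of formulas, and brackets
`[Δ]_B` annotated with a formula. -/
inductive AElem : Type where
  | fml : Formula → AElem
  | dia : Formula → Finset Formula → AElem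
  | nest : Formula → List AElem → AElem

/-- Annotated nested sequents. -/
abbrev ASeq := List AElem

/-- Annotated unary contexts. -/
inductive ACtx : Type where
  | hole : ASeq → ACtx
  | nest : Formula → ASeq → ACtx → ACtx

def ACtx.fill : ACtx → ASeq → ASeq
  | .hole Δ, Γ => Δ ++ Γ
  | .nest B Δ c, Γ => .nest B (c.fill Γ) :: Δ

/-- Formula occurrence as an annotated element: a diamond formula carries the
annotation set `s`, any other formula is unannotated. -/
def emb (A : Formula) (s : Finset Formula) : AElem :=
  match A with
  | .dia C => .dia C s
  | _ => .fml A

mutual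
/-- All diamond annotation sets in the element are empty. -/
def AElem.diaEmpty : AElem → Prop
  | .fml _ => True
  | .dia _ s => s = ∅
  | .nest _ Δ => ASeq.diaEmpty Δ
/-- All diamond annotation sets in the sequent are empty. -/
def ASeq.diaEmpty : ASeq → Prop
  | [] => True
  | e :: Δ => e.diaEmpty ∧ ASeq.diaEmpty Δ
end

mutual
/-- The element contains no bracket annotated with `B`. -/
def AElem.noBr (B : Formula) : AElem → Prop
  | .fml _ => True
  | .dia _ _ => True
  | .nest C Δ => C ≠ B ∧ ASeq.noBr B Δ
/-- The sequent contains no bracket annotated with `B`. -/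
def ASeq.noBr (B : Formula) : ASeq → Prop
  | [] => True
  | e :: Δ => e.noBr B ∧ ASeq.noBr B Δ
end

mutual
/-- The operation `(−)⁺`: weaken every bracket `[Δ']_C` to `[Δ'⁺, ◇C⊥]_C`. -/
def AElem.plus : AElem → AElem
  | .fml A => .fml A
  | .dia A s => .dia A s
  | .nest C Δ => .nest C (AElem.dia C.negate ∅ :: ASeq.plus Δ)
def ASeq.plus : ASeq → ASeq
  | [] => []
  | e :: Δ => e.plus :: ASeq.plus Δ
end

mutual
/-- Erase all annotations. -/
def AElem.erase : AElem → SeqElem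
  | .fml A => .fml A
  | .dia A _ => .fml (.dia A)
  | .nest _ Δ => .nest (ASeq.erase Δ)
def ASeq.erase : ASeq → Sequent
  | [] => []
  | e :: Δ => e.erase :: ASeq.erase Δ
end

/-- Equivalence of annotated sequents up to (deep) exchange. -/
inductive AEquiv : ASeq → ASeq → Prop where
  | nil : AEquiv [] []
  | cons {e : AElem} {Γ Δ : ASeq} : AEquiv Γ Δ → AEquiv (e :: Γ) (e :: Δ)
  | consNest {B : Formula} {Γ' Δ' Γ Δ : ASeq} :
      AEquiv Γ' Δ' → AEquiv Γ Δ → AEquiv (.nest B Γ' :: Γ) (.nest B Δ' :: Δ)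
  | swap (a b : AElem) (Γ : ASeq) : AEquiv (a :: b :: Γ) (b :: a :: Γ)
  | trans {Γ Δ Θ : ASeq} : AEquiv Γ Δ → AEquiv Δ Θ → AEquiv Γ Θ

/-- Merging two annotated sequents with the same underlying skeleton and
identical bracket annotations: diamond annotation sets are unioned. -/
inductive AMerge : ASeq → ASeq → ASeq → Prop where
  | nil : AMerge [] [] []
  | fml {C : Formula} {Γ₁ Γ₂ Γ : ASeq} :
      AMerge Γ₁ Γ₂ Γ → AMerge (.fml C :: Γ₁) (.fml C :: Γ₂) (.fml C :: Γ)
  | dia {A : Formula} {s₁ s₂ : Finset Formula} {Γ₁ Γ₂ Γ : ASeq} :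
      AMerge Γ₁ Γ₂ Γ →
      AMerge (.dia A s₁ :: Γ₁) (.dia A s₂ :: Γ₂) (.dia A (s₁ ∪ s₂) :: Γ)
  | nest {B : Formula} {Δ₁ Δ₂ Δ Γ₁ Γ₂ Γ : ASeq} :
      AMerge Δ₁ Δ₂ Δ → AMerge Γ₁ Γ₂ Γ →
      AMerge (.nest B Δ₁ :: Γ₁) (.nest B Δ₂ :: Γ₂) (.nest B Δ :: Γ)

/-- Merging two annotated contexts. -/
inductive ACtxMerge : ACtx → ACtx → ACtx → Prop where
  | hole {Δ₁ Δ₂ Δ : ASeq} : AMerge Δ₁ Δ₂ Δ →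
      ACtxMerge (.hole Δ₁) (.hole Δ₂) (.hole Δ)
  | nest {B : Formula} {Δ₁ Δ₂ Δ : ASeq} {c₁ c₂ c : ACtx} :
      AMerge Δ₁ Δ₂ Δ → ACtxMerge c₁ c₂ c →
      ACtxMerge (.nest B Δ₁ c₁) (.nest B Δ₂ c₂) (.nest B Δ c)

/-- Annotated derivability, with cut permitted on formulas satisfying `P`. -/
inductive ADeriv (P : Formula → Prop) : ASeq → Prop where
  | id {c : ACtx} {a : ℕ} :
      ASeq.diaEmpty (c.fill [.fml (.pos a), .fml (.neg a)]) →
      ADeriv P (c.fill [.fml (.pos a), .fml (.neg a)])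
  | and {c₁ c₂ c : ACtx} {A B : Formula} {s₁ s₂ : Finset Formula} :
      ACtxMerge c₁ c₂ c →
      ADeriv P (c₁.fill [emb A s₁]) → ADeriv P (c₂.fill [emb B s₂]) →
      ADeriv P (c.fill [.fml (.and A B)])
  | or {c : ACtx} {A B : Formula} {s₁ s₂ : Finset Formula} :
      ADeriv P (c.fill [emb A s₁, emb B s₂]) →
      ADeriv P (c.fill [.fml (.or A B)])
  | box {c : ACtx} {A : Formula} {S : Finset Formula} {s : Finset Formula} :
      ADeriv P (c.fill [.nest A [.dia A.negate S, emb A s]]) →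
      ADeriv P (c.fill [.fml (.box A)])
  | dia {c d : ACtx} {A B : Formula} {S s : Finset Formula} {Δ' : ASeq} :
      ADeriv P (c.fill (d.fill [.nest B (emb A s :: Δ')] ++ [.dia A S])) →
      ADeriv P (c.fill (d.fill [.nest B Δ'] ++ [.dia A (insert B S)]))
  | cut {c₁ c₂ c : ACtx} {A : Formula} {s₁ s₂ : Finset Formula} :
      P A → ACtxMerge c₁ c₂ c →
      ADeriv P (c₁.fill [emb A s₁]) → ADeriv P (c₂.fill [emb A.negate s₂]) →
      ADeriv P (c.fill [])
  | exch {Γ Δ : ASeq} : AEquiv Γ Δ → ADeriv P Γ → ADeriv P Δ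

/-!
Read a derivation from the conclusion upwards. Brackets annotated with `B` in the scope of the
chosen `◇A⊥` arise only from the rule for `□B`, and each of them is given an extra `A⊥` when it is
created: cut on `A` in the new bracket, where the premise with `A` is derivable because the fresh
`◇B⊥` supplies a `B⊥` to go with the `B` of the bracket. A use of the chosen `◇A⊥` on such a bracket
then becomes a contraction with the `A⊥` already present (again a cut on `A`, against the identity),
so that `B` is never added to its annotation. All auxiliary identities are taken in contexts with
empty annotations, so merging with them leaves the annotations of the context unchanged.
-/

theorem Formula.negate_negate (F : Formula) : F.negate.negate = F := by
  induction F <;> simp [negate, *]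

theorem ASeq.ind {motive : ASeq → Prop} (nil : motive [])
    (fml : ∀ F Γ, motive Γ → motive (.fml F :: Γ))
    (dia : ∀ D S Γ, motive Γ → motive (.dia D S :: Γ))
    (nest : ∀ E Δ Γ, motive Δ → motive Γ → motive (.nest E Δ :: Γ)) (Γ : ASeq) : motive Γ :=
  AElem.rec_1 (motive_1 := fun e => ∀ Γ, motive Γ → motive (e :: Γ)) (motive_2 := motive)
    fml dia (fun E Δ hΔ Γ => nest E Δ Γ hΔ) nil (fun _ Γ he hΓ => he Γ hΓ) Γ

namespace AEquiv

theorem of_perm {Γ Δ : ASeq} (h : Γ.Perm Δ) : AEquiv Γ Δ := by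
  induction h with
  | nil => exact .nil
  | cons _ _ ih => exact .cons ih
  | swap => exact .swap _ _ _
  | trans _ _ ih₁ ih₂ => exact .trans ih₁ ih₂

theorem refl (Γ : ASeq) : AEquiv Γ Γ :=
  .of_perm (.refl Γ)

theorem symm {Γ Δ : ASeq} (h : AEquiv Γ Δ) : AEquiv Δ Γ := by
  induction h with
  | nil => exact .nil
  | cons _ ih => exact .cons ih
  | consNest _ _ ih₁ ih₂ => exact .consNest ih₁ ih₂
  | swap => exact .swap _ _ _
  | trans _ _ ih₁ ih₂ => exact .trans ih₂ ih₁

theorem append_left (Θ : ASeq) {Γ Δ : ASeq} (h : AEquiv Γ Δ) : AEquiv (Θ ++ Γ) (Θ ++ Δ) := by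
  induction Θ with
  | nil => exact h
  | cons _ _ ih => exact .cons ih

theorem append_right (Θ : ASeq) {Γ Δ : ASeq} (h : AEquiv Γ Δ) : AEquiv (Γ ++ Θ) (Δ ++ Θ) :=
  .trans (.of_perm List.perm_append_comm)
    (.trans (h.append_left Θ) (.of_perm List.perm_append_comm))

theorem nest (E : Formula) (Θ : ASeq) {Γ Δ : ASeq} (h : AEquiv Γ Δ) :
    AEquiv (.nest E Γ :: Θ) (.nest E Δ :: Θ) :=
  .consNest h (.refl Θ)

theorem fill (c : ACtx) {Γ Δ : ASeq} (h : AEquiv Γ Δ) : AEquiv (c.fill Γ) (c.fill Δ) := by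
  induction c with
  | hole Θ => exact h.append_left Θ
  | nest E Θ c ih => exact .nest E Θ ih

end AEquiv

theorem ADeriv.perm {P : Formula → Prop} {c : ACtx} {Γ Δ : ASeq} (h : Γ.Perm Δ)
    (hΓ : ADeriv P (c.fill Γ)) : ADeriv P (c.fill Δ) :=
  .exch (.fill c (.of_perm h)) hΓ

namespace ACtx

/-- Composition of contexts. Since a context lists its bracket before the surrounding formulas,
filling a composition is iterated filling only up to exchange. -/
def comp : ACtx → ACtx → ACtx
  | .hole Γ, .hole Δ => .hole (Γ ++ Δ)
  | .hole Γ, .nest E Δ d => .nest E (Γ ++ Δ) d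
  | .nest E Γ c, d => .nest E Γ (c.comp d)

theorem comp_hole_fill (c : ACtx) (Γ Δ : ASeq) :
    (c.comp (.hole Γ)).fill Δ = c.fill (Γ ++ Δ) := by
  induction c with
  | hole Θ => simp [comp, fill]
  | nest E Θ c ih => simp [comp, fill, ih]

theorem comp_fill (c d : ACtx) (Γ : ASeq) :
    AEquiv ((c.comp d).fill Γ) (c.fill (d.fill Γ)) := by
  induction c with
  | hole Θ =>
    cases d with
    | hole Δ => simpa [comp, fill] using .refl _
    | nest E Δ d => exact .of_perm List.perm_middle.symm
  | nest E Θ c ih => exact .nest E Θ ih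

theorem hole_comp_fill (d : ACtx) (Γ Δ : ASeq) :
    AEquiv (((hole Δ).comp d).fill Γ) (d.fill Γ ++ Δ) :=
  (comp_fill _ _ _).trans (.of_perm List.perm_append_comm)

theorem comp_hole_comp_fill (c d : ACtx) (Γ Δ : ASeq) :
    AEquiv ((c.comp ((hole Δ).comp d)).fill Γ) (c.fill (d.fill Γ ++ Δ)) :=
  (comp_fill _ _ _).trans (.fill c (hole_comp_fill d Γ Δ))

theorem comp_hole_comp_nest_fill (c d : ACtx) (E : Formula) (Γ Θ Δ : ASeq) :
    AEquiv (((c.comp ((hole Δ).comp d)).comp (nest E [] (hole Θ))).fill Γ)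
      (c.fill (d.fill [.nest E (Γ ++ Θ)] ++ Δ)) :=
  (comp_fill _ _ _).trans <| (comp_hole_comp_fill c d _ Δ).trans <| .fill c <|
    .append_right Δ <| .fill d <| .nest E [] (.of_perm List.perm_append_comm)

/-- The context analogue of `ASeq.diaEmpty`: all diamond annotation sets are empty. -/
def diaEmpty : ACtx → Prop
  | .hole Γ => ASeq.diaEmpty Γ
  | .nest _ Γ c => ASeq.diaEmpty Γ ∧ c.diaEmpty

end ACtx

theorem ASeq.diaEmpty_append {Γ Δ : ASeq} :
    ASeq.diaEmpty (Γ ++ Δ) ↔ ASeq.diaEmpty Γ ∧ ASeq.diaEmpty Δ := by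
  induction Γ with
  | nil => simp [ASeq.diaEmpty]
  | cons e Γ ih => simp [ASeq.diaEmpty, ih, and_assoc]

theorem emb_diaEmpty (F : Formula) : (emb F ∅).diaEmpty := by
  cases F <;> simp [emb, AElem.diaEmpty]

namespace ACtx

theorem diaEmpty_fill {c : ACtx} {Γ : ASeq} :
    ASeq.diaEmpty (c.fill Γ) ↔ c.diaEmpty ∧ ASeq.diaEmpty Γ := by
  induction c with
  | hole Δ => exact ASeq.diaEmpty_append
  | nest E Δ c ih => simp only [fill, ASeq.diaEmpty, AElem.diaEmpty, diaEmpty, ih]; tauto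

theorem diaEmpty_comp {c d : ACtx} : (c.comp d).diaEmpty ↔ c.diaEmpty ∧ d.diaEmpty := by
  induction c with
  | hole Δ => cases d <;> simp [comp, diaEmpty, ASeq.diaEmpty_append, and_assoc]
  | nest E Δ c ih => simp [comp, diaEmpty, ih, and_assoc]

end ACtx

namespace AMerge

theorem append {Γ₁ Γ₂ Γ Δ₁ Δ₂ Δ : ASeq} (hΓ : AMerge Γ₁ Γ₂ Γ) (hΔ : AMerge Δ₁ Δ₂ Δ) :
    AMerge (Γ₁ ++ Δ₁) (Γ₂ ++ Δ₂) (Γ ++ Δ) := by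
  induction hΓ with
  | nil => exact hΔ
  | fml _ ih => exact .fml ih
  | dia _ ih => exact .dia ih
  | nest h _ _ ih => exact .nest h ih

theorem emb (F : Formula) (s t : Finset Formula) {Γ₁ Γ₂ Γ : ASeq} (h : AMerge Γ₁ Γ₂ Γ) :
    AMerge (emb F s :: Γ₁) (emb F t :: Γ₂) (emb F (s ∪ t) :: Γ) := by
  cases F <;> first | exact .fml h | exact .dia h

theorem exists_diaEmpty_left (Γ : ASeq) : ∃ Γ₀, ASeq.diaEmpty Γ₀ ∧ AMerge Γ₀ Γ Γ := by
  induction Γ using ASeq.ind with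
  | nil => exact ⟨[], trivial, .nil⟩
  | fml F Γ ih =>
    obtain ⟨Γ₀, h₀, h⟩ := ih
    exact ⟨.fml F :: Γ₀, ⟨trivial, h₀⟩, .fml h⟩
  | dia D S Γ ih =>
    obtain ⟨Γ₀, h₀, h⟩ := ih
    exact ⟨.dia D ∅ :: Γ₀, ⟨rfl, h₀⟩, by simpa using h.dia (A := D) (s₁ := ∅) (s₂ := S)⟩
  | nest E Δ Γ ihΔ ihΓ =>
    obtain ⟨Δ₀, hΔ₀, hΔ⟩ := ihΔ
    obtain ⟨Γ₀, hΓ₀, hΓ⟩ := ihΓ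
    exact ⟨.nest E Δ₀ :: Γ₀, ⟨hΔ₀, hΓ₀⟩, .nest hΔ hΓ⟩

end AMerge

namespace ACtxMerge

theorem comp {c₁ c₂ c d₁ d₂ d : ACtx} (hc : ACtxMerge c₁ c₂ c) (hd : ACtxMerge d₁ d₂ d) :
    ACtxMerge (c₁.comp d₁) (c₂.comp d₂) (c.comp d) := by
  induction hc with
  | hole h =>
    cases hd with
    | hole h' => exact .hole (h.append h')
    | nest h' hd => exact .nest (h.append h') hd
  | nest h _ ih => exact .nest h ih

theorem exists_diaEmpty_left (c : ACtx) : ∃ c₀ : ACtx, c₀.diaEmpty ∧ ACtxMerge c₀ c c := by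
  induction c with
  | hole Γ =>
    obtain ⟨Γ₀, h₀, h⟩ := AMerge.exists_diaEmpty_left Γ
    exact ⟨.hole Γ₀, h₀, .hole h⟩
  | nest E Γ c ih =>
    obtain ⟨Γ₀, h₀, h⟩ := AMerge.exists_diaEmpty_left Γ
    obtain ⟨c₀, hc₀, hc⟩ := ih
    exact ⟨.nest E Γ₀ c₀, ⟨h₀, hc₀⟩, .nest h hc⟩

end ACtxMerge

namespace ADeriv

variable {P : Formula → Prop}

theorem and_append {c₁ c₂ c : ACtx} {Γ₁ Γ₂ Γ : ASeq} {F G : Formula} {s t : Finset Formula}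
    (hc : ACtxMerge c₁ c₂ c) (hΓ : AMerge Γ₁ Γ₂ Γ) (hF : ADeriv P (c₁.fill (Γ₁ ++ [emb F s])))
    (hG : ADeriv P (c₂.fill (Γ₂ ++ [emb G t]))) :
    ADeriv P (c.fill (Γ ++ [.fml (.and F G)])) := by
  rw [← ACtx.comp_hole_fill] at *
  exact .and (hc.comp (.hole hΓ)) hF hG

theorem or_append {c : ACtx} {Γ : ASeq} {F G : Formula} {s t : Finset Formula}
    (h : ADeriv P (c.fill (Γ ++ [emb F s, emb G t]))) :
    ADeriv P (c.fill (Γ ++ [.fml (.or F G)])) := by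
  rw [← ACtx.comp_hole_fill] at *
  exact .or h

theorem box_append {c : ACtx} {Γ : ASeq} {F : Formula} {S s : Finset Formula}
    (h : ADeriv P (c.fill (Γ ++ [.nest F [.dia F.negate S, emb F s]]))) :
    ADeriv P (c.fill (Γ ++ [.fml (.box F)])) := by
  rw [← ACtx.comp_hole_fill] at *
  exact .box h

theorem cut_append {c₁ c₂ c : ACtx} {Γ₁ Γ₂ Γ : ASeq} {F : Formula} {s t : Finset Formula}
    (hF : P F) (hc : ACtxMerge c₁ c₂ c) (hΓ : AMerge Γ₁ Γ₂ Γ)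
    (h₁ : ADeriv P (c₁.fill (Γ₁ ++ [emb F s])))
    (h₂ : ADeriv P (c₂.fill (Γ₂ ++ [emb F.negate t]))) : ADeriv P (c.fill Γ) := by
  rw [← ACtx.comp_hole_fill] at h₁ h₂
  simpa [ACtx.comp_hole_fill] using ADeriv.cut hF (hc.comp (.hole hΓ)) h₁ h₂

/-- `F` and `G` are complementary if `F, G` is derivable in every context without annotations.
Merging with such a context leaves all annotations unchanged, so identities of this form can be cut
against any derivation. -/
def Complementary (P : Formula → Prop) (F G : Formula) : Prop :=
  ∀ c : ACtx, c.diaEmpty → ∃ s t, ADeriv P (c.fill [emb F s, emb G t])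

namespace Complementary

theorem symm {F G : Formula} (h : Complementary P F G) : Complementary P G F := fun c hc => by
  obtain ⟨s, t, h⟩ := h c hc
  exact ⟨t, s, h.perm (.swap _ _ _)⟩

theorem and_or {F F' G G' : Formula} (hF : Complementary P F F') (hG : Complementary P G G') :
    Complementary P (.and F G) (.or F' G') := fun c hc => by
  obtain ⟨c₀, hc₀, hmerge⟩ := ACtxMerge.exists_diaEmpty_left c
  obtain ⟨s, t, hF⟩ := hF (c₀.comp (.hole [emb G' ∅]))
    (ACtx.diaEmpty_comp.2 ⟨hc₀, emb_diaEmpty G', trivial⟩)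
  obtain ⟨s', t', hG⟩ := hG (c.comp (.hole [emb F' ∅]))
    (ACtx.diaEmpty_comp.2 ⟨hc, emb_diaEmpty F', trivial⟩)
  rw [ACtx.comp_hole_fill] at hF hG
  have hand := and_append hmerge (.emb F' t ∅ (.emb G' ∅ t' .nil))
    (hF.perm (Γ := [emb G' ∅, emb F s, emb F' t]) (Δ := [emb F' t, emb G' ∅, emb F s]) <|
      List.perm_append_comm (l₁ := [_, _]) (l₂ := [_]))
    (hG.perm (Γ := [emb F' ∅, emb G s', emb G' t']) (Δ := [emb F' ∅, emb G' t', emb G s']) <|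
      .cons _ (.swap _ _ _))
  exact ⟨∅, ∅, or_append (Γ := [_]) (hand.perm (List.perm_append_comm (l₁ := [_, _])))⟩

theorem box_dia {F : Formula} (hF : Complementary P F F.negate) :
    Complementary P (.box F) (.dia F.negate) := fun c hc => by
  obtain ⟨s, t, hF⟩ := hF (c.comp (.nest F [.dia F.negate ∅] (.hole [.dia F.negate ∅])))
    (ACtx.diaEmpty_comp.2 ⟨hc, by simp [ACtx.diaEmpty, ASeq.diaEmpty, AElem.diaEmpty]⟩)
  have hrot : [.dia F.negate ∅, emb F s, emb F.negate t].Perm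
      [emb F.negate t, .dia F.negate ∅, emb F s] := List.perm_append_comm (l₁ := [_, _]) (l₂ := [_])
  have hnest : ADeriv P (c.fill [.nest F [.dia F.negate ∅, emb F s, emb F.negate t],
      .dia F.negate ∅]) := .exch (ACtx.comp_fill _ _ _) hF
  have hdia := dia (d := .hole []) (.exch (.fill c (.nest F _ (.of_perm hrot))) hnest)
  exact ⟨∅, insert F ∅, (box_append (Γ := [_]) (hdia.perm (.swap _ _ _))).perm (.swap _ _ _)⟩

end Complementary

theorem complementary_negate (F : Formula) : Complementary P F F.negate := by
  have atoms (a : ℕ) : Complementary P (.pos a) (.neg a) := fun c hc =>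
    ⟨∅, ∅, .id (ACtx.diaEmpty_fill.2 ⟨hc, trivial, trivial, trivial⟩)⟩
  induction F with
  | pos a => exact atoms a
  | neg a => exact (atoms a).symm
  | and F G hF hG => exact hF.and_or hG
  | or F G hF hG => exact (hF.symm.and_or hG.symm).symm
  | box F hF => exact hF.box_dia
  | dia F hF =>
    have hbox : Complementary P (.box F.negate) (.dia F.negate.negate) :=
      .box_dia (F.negate_negate.symm ▸ hF.symm)
    exact (F.negate_negate ▸ hbox).symm

variable {A : Formula} {c d : ACtx}

theorem exists_contract_negate (hA : P A) {s t : Finset Formula}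
    (h : ADeriv P (c.fill [emb A.negate s, emb A.negate t])) :
    ∃ u, ADeriv P (c.fill [emb A.negate u]) := by
  obtain ⟨c₀, hc₀, hc⟩ := ACtxMerge.exists_diaEmpty_left c
  obtain ⟨w, v, hid⟩ := complementary_negate A c₀ hc₀
  exact ⟨_, cut_append (Γ₁ := [_]) (Γ₂ := [_]) hA hc (.emb _ v s .nil)
    (hid.perm (.swap _ _ _)) h⟩

theorem exists_nest_contract_negate (hA : P A) {E : Formula} {Γ Δ : ASeq} {s t : Finset Formula}
    (h : ADeriv P (c.fill (d.fill [.nest E (emb A.negate s :: emb A.negate t :: Γ)] ++ Δ))) :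
    ∃ u, ADeriv P (c.fill (d.fill [.nest E (emb A.negate u :: Γ)] ++ Δ)) := by
  obtain ⟨u, h⟩ := exists_contract_negate hA
    (exch (ACtx.comp_hole_comp_nest_fill c d E [_, _] Γ Δ).symm h)
  exact ⟨u, exch (ACtx.comp_hole_comp_nest_fill c d E [_] Γ Δ) h⟩

theorem dia_middle {D E : Formula} {S s : Finset Formula} {Γ Δ : ASeq}
    (h : ADeriv P (c.fill (d.fill [.nest E (Γ ++ emb D s :: Δ)] ++ [.dia D S]))) :
    ADeriv P (c.fill (d.fill [.nest E (Γ ++ Δ)] ++ [.dia D (insert E S)])) :=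
  .dia (exch (.fill c <| .append_right _ <| .fill d <| .nest E [] <| .of_perm List.perm_middle) h)

-- Using the diamond on the bracket itself puts `F` and `F⊥` side by side.
theorem exists_nest_dia_negate (F : Formula) {Δ : ASeq} (hc : c.diaEmpty) (hd : d.diaEmpty)
    (hΔ : ASeq.diaEmpty Δ) :
    ∃ u, ADeriv P (c.fill (d.fill [.nest F (emb F u :: Δ)] ++ [.dia F.negate {F}])) := by
  obtain ⟨s, t, h⟩ := (complementary_negate F).symm
    ((c.comp ((ACtx.hole [.dia F.negate ∅]).comp d)).comp (.nest F [] (.hole Δ)))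
    (by simp [ACtx.diaEmpty_comp, ACtx.diaEmpty, ASeq.diaEmpty, AElem.diaEmpty, hc, hd, hΔ])
  exact ⟨t, dia (S := ∅) (.exch (ACtx.comp_hole_comp_nest_fill _ _ _ _ _ _) h)⟩

theorem exists_box_of_nest_negate (hA : P A) {F : Formula} {s t u S : Finset Formula}
    (h : ADeriv P (c.fill (d.fill [.nest F [emb A.negate t, .dia F.negate S, emb F u]] ++
      [.dia F.negate s]))) :
    ∃ s', ADeriv P (c.fill (d.fill [.fml (.box F)] ++ [.dia F.negate s'])) := by
  obtain ⟨c₀, hc₀, hc⟩ := ACtxMerge.exists_diaEmpty_left c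
  obtain ⟨d₀, hd₀, hd⟩ := ACtxMerge.exists_diaEmpty_left d
  obtain ⟨v, hid⟩ := exists_nest_dia_negate (P := P) F (Δ := [.dia F.negate ∅, emb A ∅]) hc₀ hd₀
    ⟨rfl, emb_diaEmpty A, trivial⟩
  have hrot : [emb F v, .dia F.negate ∅, emb A ∅].Perm [emb A ∅, .dia F.negate ∅, emb F v] :=
    (List.reverse_perm _).symm
  have hleft := exch ((AEquiv.fill c₀ <| .append_right _ <| .fill d₀ <| .nest F [] <|
    .of_perm hrot).trans (ACtx.comp_hole_comp_nest_fill _ _ _ [_] [_, _] _).symm) hid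
  have hcut := cut hA ((hc.comp ((ACtxMerge.hole (.dia .nil)).comp hd)).comp
    (.nest .nil (.hole (.dia (.emb F v u .nil))))) hleft
    (exch (ACtx.comp_hole_comp_nest_fill _ _ _ [_] [_, _] _).symm h)
  have hbox := box (exch (ACtx.comp_fill _ _ _) hcut)
  exact ⟨_, exch (ACtx.comp_hole_comp_fill _ _ _ _) hbox⟩

end ADeriv

section Marking

variable (A B : Formula)

/-- `BracketFrame A B b b' E ℋ`: a bracket annotated with `E` may receive any member of `ℋ` as
additional content, namely nothing, the fresh `◇B⊥` whose scope begins there, or `A⊥` if `E = B`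
inside this scope. The flags `b` and `b'` say whether the bracket and its content are in scope. -/
inductive BracketFrame : Bool → Bool → Formula → Set ASeq → Prop
  | plain {b : Bool} {E : Formula} : (b = true → E ≠ B) → BracketFrame b b E {[]}
  | enter {E : Formula} : BracketFrame false true E (Set.range fun s => [.dia B.negate s])
  | pad : BracketFrame true true B (Set.range fun s => [emb A.negate s])

mutual
/-- `AElem.Marking A B b e 𝓎`: the elimination of `B` may replace `e` by any member of `𝓎`, for some
choice of the diamonds `◇A⊥` losing `B` from their annotation and of the brackets receiving a fresh
`◇B⊥`. The flag `b` says whether `e` is in scope of a fresh `◇B⊥` already. -/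
inductive AElem.Marking : Bool → AElem → Set AElem → Prop
  | fml {b : Bool} {F : Formula} : AElem.Marking b (.fml F) {.fml F}
  | dia {b : Bool} {D : Formula} {S : Finset Formula} : AElem.Marking b (.dia D S) {.dia D S}
  | mark {S : Finset Formula} :
      AElem.Marking true (.dia A.negate S) (AElem.dia A.negate '' {T | T ⊆ S \ {B}})
  | nest {b b' : Bool} {E : Formula} {Γ : ASeq} {ℋ 𝒴 : Set ASeq} :
      BracketFrame A B b b' E ℋ → ASeq.Marking b' Γ 𝒴 →
      AElem.Marking b (.nest E Γ) (Set.image2 (fun H Y => .nest E (H ++ Y)) ℋ 𝒴)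
/-- `AElem.Marking` for sequents. -/
inductive ASeq.Marking : Bool → ASeq → Set ASeq → Prop
  | nil {b : Bool} : ASeq.Marking b [] {[]}
  | cons {b : Bool} {e : AElem} {Γ : ASeq} {𝓎 : Set AElem} {𝒴 : Set ASeq} :
      AElem.Marking b e 𝓎 → ASeq.Marking b Γ 𝒴 →
      ASeq.Marking b (e :: Γ) (Set.image2 List.cons 𝓎 𝒴)
end

/-- `AElem.Marking` for contexts; the second flag is that of the hole. -/
inductive ACtx.Marking : Bool → Bool → ACtx → Set ACtx → Prop
  | hole {b : Bool} {Γ : ASeq} {𝒴 : Set ASeq} :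
      ASeq.Marking A B b Γ 𝒴 → ACtx.Marking b b (.hole Γ) (ACtx.hole '' 𝒴)
  | nest {b b' b'' : Bool} {E : Formula} {Γ : ASeq} {c : ACtx} {ℋ 𝒴 : Set ASeq} {𝒞 : Set ACtx} :
      BracketFrame A B b b' E ℋ → ASeq.Marking A B b Γ 𝒴 → ACtx.Marking b' b'' c 𝒞 →
      ACtx.Marking b b'' (.nest E Γ c)
        {x | ∃ H ∈ ℋ, ∃ Y ∈ 𝒴, ∃ c' ∈ 𝒞, x = .nest E Y ((ACtx.hole H).comp c')}

variable {A B} {b b' : Bool}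

namespace BracketFrame

variable {E : Formula} {ℋ : Set ASeq}

theorem exists_diaEmpty (h : BracketFrame A B b b' E ℋ) : ∃ H ∈ ℋ, ASeq.diaEmpty H := by
  cases h with
  | plain => exact ⟨[], rfl, trivial⟩
  | enter => exact ⟨_, ⟨∅, rfl⟩, rfl, trivial⟩
  | pad => exact ⟨_, ⟨∅, rfl⟩, emb_diaEmpty _, trivial⟩

theorem exists_merge (h : BracketFrame A B b b' E ℋ) {H₁ H₂ : ASeq} (h₁ : H₁ ∈ ℋ) (h₂ : H₂ ∈ ℋ) :
    ∃ H ∈ ℋ, AMerge H₁ H₂ H := by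
  cases h with
  | plain =>
    obtain ⟨rfl, rfl⟩ := And.intro h₁ h₂
    exact ⟨[], rfl, .nil⟩
  | enter =>
    obtain ⟨⟨s, rfl⟩, t, rfl⟩ := And.intro h₁ h₂
    exact ⟨_, ⟨s ∪ t, rfl⟩, .dia .nil⟩
  | pad =>
    obtain ⟨⟨s, rfl⟩, t, rfl⟩ := And.intro h₁ h₂
    exact ⟨_, ⟨s ∪ t, rfl⟩, .emb _ s t .nil⟩

theorem hole_eq_true (h : BracketFrame A B true b' E ℋ) : b' = true := by
  cases h <;> rfl

theorem exists_dia_mark {P : Formula → Prop} (hA : P A) {c d : ACtx} {Γ H : ASeq}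
    {S T s : Finset Formula} (hE : BracketFrame A B true b' E ℋ) (hH : H ∈ ℋ) (hT : T ⊆ S \ {B})
    (h : ADeriv P (c.fill (d.fill [.nest E (H ++ emb A.negate s :: Γ)] ++ [.dia A.negate T]))) :
    ∃ H' ∈ ℋ, ∃ T' ⊆ insert E S \ {B},
      ADeriv P (c.fill (d.fill [.nest E (H' ++ Γ)] ++ [.dia A.negate T'])) := by
  cases hE with
  | plain hEB =>
    refine ⟨H, hH, insert E T, ?_, h.dia_middle⟩
    rw [Finset.insert_sdiff_of_notMem _ (by simpa using hEB rfl)]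
    exact Finset.insert_subset_insert E hT
  | pad =>
    obtain ⟨t, rfl⟩ := hH
    obtain ⟨u, h⟩ := ADeriv.exists_nest_contract_negate hA h
    exact ⟨_, ⟨u, rfl⟩, T,
      hT.trans (Finset.sdiff_subset_sdiff (Finset.subset_insert B S) subset_rfl), h⟩

end BracketFrame

theorem AElem.Marking.emb {F : Formula} {s : Finset Formula} :
    AElem.Marking A B b (emb F s) {emb F s} := by
  cases F <;> first | exact .dia | exact .fml

theorem AElem.Marking.exists_of_dia_union {D : Formula} {S₁ S₂ : Finset Formula} {𝓎 : Set AElem}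
    (h : AElem.Marking A B b (.dia D (S₁ ∪ S₂)) 𝓎) :
    ∃ 𝓎₁ 𝓎₂, AElem.Marking A B b (.dia D S₁) 𝓎₁ ∧ AElem.Marking A B b (.dia D S₂) 𝓎₂ ∧
      ∀ y₁ ∈ 𝓎₁, ∀ y₂ ∈ 𝓎₂, ∃ T₁ T₂, y₁ = .dia D T₁ ∧ y₂ = .dia D T₂ ∧ .dia D (T₁ ∪ T₂) ∈ 𝓎 := by
  cases h with
  | dia => exact ⟨_, _, .dia, .dia, fun _ h₁ _ h₂ => ⟨S₁, S₂, h₁, h₂, rfl⟩⟩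
  | mark =>
    refine ⟨_, _, .mark, .mark, ?_⟩
    rintro _ ⟨T₁, hT₁, rfl⟩ _ ⟨T₂, hT₂, rfl⟩
    exact ⟨T₁, T₂, rfl, rfl, T₁ ∪ T₂, Finset.union_sdiff_distrib S₁ S₂ {B} ▸
      Finset.union_subset_union hT₁ hT₂, rfl⟩

namespace ASeq.Marking

variable {Γ Γ' Γ₁ Γ₂ Δ : ASeq} {𝒴 𝒴' 𝒵 : Set ASeq}

theorem emb {F : Formula} {s : Finset Formula} : ASeq.Marking A B b [emb F s] {[emb F s]} := by
  simpa using ASeq.Marking.cons .emb .nil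

theorem eq_singleton_of_fml {F : Formula} (h : ASeq.Marking A B b [.fml F] 𝒴) :
    𝒴 = {[.fml F]} := by
  obtain _ | ⟨⟨⟩, ⟨⟩⟩ := h
  simp

theorem append (hΓ : ASeq.Marking A B b Γ 𝒴) (hΔ : ASeq.Marking A B b Δ 𝒵) :
    ASeq.Marking A B b (Γ ++ Δ) (Set.image2 (· ++ ·) 𝒴 𝒵) := by
  induction Γ generalizing 𝒴 with
  | nil =>
    cases hΓ
    simpa using hΔ
  | cons e Γ ih =>
    cases hΓ with
    | cons he hΓ =>
      rw [Set.image2_assoc (f' := List.cons) (g' := (· ++ ·)) fun _ _ _ => rfl]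
      exact .cons he (ih hΓ)

theorem exists_append (h : ASeq.Marking A B b (Γ ++ Δ) 𝒴) :
    ∃ 𝒴₁ 𝒴₂, ASeq.Marking A B b Γ 𝒴₁ ∧ ASeq.Marking A B b Δ 𝒴₂ ∧
      𝒴 = Set.image2 (· ++ ·) 𝒴₁ 𝒴₂ := by
  induction Γ generalizing 𝒴 with
  | nil => exact ⟨_, 𝒴, .nil, h, by simp⟩
  | cons e Γ ih =>
    cases h with
    | cons he h =>
      obtain ⟨𝒴₁, 𝒴₂, h₁, h₂, rfl⟩ := ih h
      exact ⟨_, 𝒴₂, .cons he h₁, h₂, by rw [Set.image2_assoc]; intros; rfl⟩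

theorem exists_diaEmpty (h : ASeq.Marking A B b Γ 𝒴) (hΓ : ASeq.diaEmpty Γ) :
    ∃ Y ∈ 𝒴, ASeq.diaEmpty Y := by
  induction Γ using ASeq.ind generalizing b 𝒴 with
  | nil =>
    cases h
    exact ⟨[], rfl, trivial⟩
  | fml F Γ ih =>
    obtain _ | ⟨⟨⟩, h⟩ := h
    obtain ⟨Y, hY, hY₀⟩ := ih h hΓ.2
    exact ⟨_, Set.mem_image2_of_mem rfl hY, trivial, hY₀⟩
  | dia D S Γ ih =>
    obtain _ | ⟨he, h⟩ := h
    obtain ⟨Y, hY, hY₀⟩ := ih h hΓ.2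
    cases he with
    | dia => exact ⟨_, Set.mem_image2_of_mem rfl hY, hΓ.1, hY₀⟩
    | mark => exact ⟨_, Set.mem_image2_of_mem ⟨∅, Finset.empty_subset _, rfl⟩ hY, rfl, hY₀⟩
  | nest E Δ Γ ihΔ ihΓ =>
    obtain _ | ⟨he, h⟩ := h
    cases he with
    | nest hE hΔ =>
      obtain ⟨H, hH, hH₀⟩ := hE.exists_diaEmpty
      obtain ⟨Z, hZ, hZ₀⟩ := ihΔ hΔ hΓ.1
      obtain ⟨Y, hY, hY₀⟩ := ihΓ h hΓ.2
      exact ⟨_, Set.mem_image2_of_mem (Set.mem_image2_of_mem hH hZ) hY,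
        ASeq.diaEmpty_append.2 ⟨hH₀, hZ₀⟩, hY₀⟩

theorem exists_of_equiv (h : AEquiv Γ Γ') (hΓ' : ASeq.Marking A B b Γ' 𝒴') :
    ∃ 𝒴, ASeq.Marking A B b Γ 𝒴 ∧ ∀ Y ∈ 𝒴, ∃ Y' ∈ 𝒴', AEquiv Y Y' := by
  induction h generalizing b 𝒴' with
  | nil => exact ⟨𝒴', hΓ', fun Y hY => ⟨Y, hY, .refl Y⟩⟩
  | cons _ ih =>
    obtain _ | ⟨he, hΓ'⟩ := hΓ'
    obtain ⟨𝒴, hΓ, h⟩ := ih hΓ'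
    refine ⟨_, .cons he hΓ, ?_⟩
    rintro _ ⟨y, hy, Y, hY, rfl⟩
    obtain ⟨Y', hY', hYY'⟩ := h Y hY
    exact ⟨y :: Y', ⟨y, hy, Y', hY', rfl⟩, .cons hYY'⟩
  | @consNest E _ _ _ _ _ _ ihΔ ihΓ =>
    obtain _ | ⟨he, hΓ'⟩ := hΓ'
    cases he with
    | nest hE hΔ' =>
      obtain ⟨𝒵, hΔ, hZ⟩ := ihΔ hΔ'
      obtain ⟨𝒴, hΓ, hY⟩ := ihΓ hΓ'
      refine ⟨_, .cons (.nest hE hΔ) hΓ, ?_⟩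
      rintro _ ⟨_, ⟨H, hH, Z, hmemZ, rfl⟩, Y, hmemY, rfl⟩
      obtain ⟨Z', hmemZ', hZZ'⟩ := hZ Z hmemZ
      obtain ⟨Y', hmemY', hYY'⟩ := hY Y hmemY
      exact ⟨.nest E (H ++ Z') :: Y', ⟨_, ⟨H, hH, Z', hmemZ', rfl⟩, Y', hmemY', rfl⟩,
        .consNest (hZZ'.append_left H) hYY'⟩
  | swap =>
    obtain _ | ⟨hb, _ | ⟨ha, hΓ'⟩⟩ := hΓ'
    refine ⟨_, .cons ha (.cons hb hΓ'), ?_⟩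
    rintro _ ⟨x, hx, _, ⟨y, hy, Y, hY, rfl⟩, rfl⟩
    exact ⟨y :: x :: Y, ⟨y, hy, _, ⟨x, hx, Y, hY, rfl⟩, rfl⟩, .swap x y Y⟩
  | trans _ _ ih₁ ih₂ =>
    obtain ⟨𝒵, hΔ, h₂⟩ := ih₂ hΓ'
    obtain ⟨𝒴, hΓ, h₁⟩ := ih₁ hΔ
    refine ⟨𝒴, hΓ, fun Y hY => ?_⟩
    obtain ⟨Z, hZ, hYZ⟩ := h₁ Y hY
    obtain ⟨Y', hY', hZY'⟩ := h₂ Z hZ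
    exact ⟨Y', hY', hYZ.trans hZY'⟩

theorem exists_of_merge (h : AMerge Γ₁ Γ₂ Γ) (hΓ : ASeq.Marking A B b Γ 𝒴) :
    ∃ 𝒴₁ 𝒴₂, ASeq.Marking A B b Γ₁ 𝒴₁ ∧ ASeq.Marking A B b Γ₂ 𝒴₂ ∧
      ∀ Y₁ ∈ 𝒴₁, ∀ Y₂ ∈ 𝒴₂, ∃ Y ∈ 𝒴, AMerge Y₁ Y₂ Y := by
  induction h generalizing b 𝒴 with
  | nil =>
    cases hΓ
    refine ⟨_, _, .nil, .nil, ?_⟩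
    rintro _ rfl _ rfl
    exact ⟨[], rfl, .nil⟩
  | fml _ ih =>
    obtain _ | ⟨he, hΓ⟩ := hΓ
    cases he
    obtain ⟨𝒴₁, 𝒴₂, h₁, h₂, h⟩ := ih hΓ
    refine ⟨_, _, .cons .fml h₁, .cons .fml h₂, ?_⟩
    rintro _ ⟨_, rfl, Y₁, hY₁, rfl⟩ _ ⟨_, rfl, Y₂, hY₂, rfl⟩
    obtain ⟨Y, hY, hmerge⟩ := h Y₁ hY₁ Y₂ hY₂
    exact ⟨_, ⟨_, rfl, Y, hY, rfl⟩, .fml hmerge⟩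
  | dia _ ih =>
    obtain _ | ⟨he, hΓ⟩ := hΓ
    obtain ⟨𝓎₁, 𝓎₂, he₁, he₂, he⟩ := he.exists_of_dia_union
    obtain ⟨𝒴₁, 𝒴₂, h₁, h₂, h⟩ := ih hΓ
    refine ⟨_, _, .cons he₁ h₁, .cons he₂ h₂, ?_⟩
    rintro _ ⟨y₁, hy₁, Y₁, hY₁, rfl⟩ _ ⟨y₂, hy₂, Y₂, hY₂, rfl⟩
    obtain ⟨T₁, T₂, rfl, rfl, hT⟩ := he y₁ hy₁ y₂ hy₂
    obtain ⟨Y, hY, hmerge⟩ := h Y₁ hY₁ Y₂ hY₂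
    exact ⟨_, ⟨_, hT, Y, hY, rfl⟩, .dia hmerge⟩
  | nest _ _ ihΔ ihΓ =>
    obtain _ | ⟨he, hΓ⟩ := hΓ
    cases he with
    | nest hE hΔ =>
      obtain ⟨𝒵₁, 𝒵₂, hΔ₁, hΔ₂, hZ⟩ := ihΔ hΔ
      obtain ⟨𝒴₁, 𝒴₂, hΓ₁, hΓ₂, hY⟩ := ihΓ hΓ
      refine ⟨_, _, .cons (.nest hE hΔ₁) hΓ₁, .cons (.nest hE hΔ₂) hΓ₂, ?_⟩
      rintro _ ⟨_, ⟨H₁, hH₁, Z₁, hZ₁, rfl⟩, Y₁, hY₁, rfl⟩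
        _ ⟨_, ⟨H₂, hH₂, Z₂, hZ₂, rfl⟩, Y₂, hY₂, rfl⟩
      obtain ⟨H, hH, hmergeH⟩ := hE.exists_merge hH₁ hH₂
      obtain ⟨Z, hZ, hmergeZ⟩ := hZ Z₁ hZ₁ Z₂ hZ₂
      obtain ⟨Y, hY, hmergeY⟩ := hY Y₁ hY₁ Y₂ hY₂
      exact ⟨_, ⟨_, ⟨H, hH, Z, hZ, rfl⟩, Y, hY, rfl⟩, .nest (hmergeH.append hmergeZ) hmergeY⟩

theorem singleton_of_noBr (hΓ : b = true → ASeq.noBr B Γ) : ASeq.Marking A B b Γ {Γ} := by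
  induction Γ using ASeq.ind with
  | nil => exact .nil
  | fml F Γ ih => simpa using cons .fml (ih fun hb => (hΓ hb).2)
  | dia D S Γ ih => simpa using cons .dia (ih fun hb => (hΓ hb).2)
  | nest E Δ Γ ihΔ ihΓ =>
    simpa using cons (.nest (.plain fun hb => (hΓ hb).1.1) (ihΔ fun hb => (hΓ hb).1.2))
      (ihΓ fun hb => (hΓ hb).2)

end ASeq.Marking

namespace ACtx.Marking

variable {c c₁ c₂ : ACtx} {Γ : ASeq} {𝒞 : Set ACtx} {𝒴 𝒳 : Set ASeq}

theorem hole_eq_true (h : ACtx.Marking A B true b c 𝒞) : b = true := by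
  induction c generalizing 𝒞 with
  | hole Δ =>
    cases h
    rfl
  | nest E Δ c ih =>
    obtain _ | ⟨hE, _, hc⟩ := h
    exact ih (hE.hole_eq_true ▸ hc)

theorem exists_diaEmpty (h : ACtx.Marking A B b b' c 𝒞) (hc : c.diaEmpty) :
    ∃ c' ∈ 𝒞, c'.diaEmpty := by
  induction c generalizing b 𝒞 with
  | hole Δ =>
    obtain ⟨hΔ⟩ := h
    obtain ⟨Y, hY, hY₀⟩ := hΔ.exists_diaEmpty hc
    exact ⟨.hole Y, ⟨Y, hY, rfl⟩, hY₀⟩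
  | nest E Δ c ih =>
    obtain _ | ⟨hE, hΔ, hc'⟩ := h
    obtain ⟨H, hH, hH₀⟩ := hE.exists_diaEmpty
    obtain ⟨Y, hY, hY₀⟩ := hΔ.exists_diaEmpty hc.1
    obtain ⟨d, hd, hd₀⟩ := ih hc' hc.2
    exact ⟨_, ⟨H, hH, Y, hY, d, hd, rfl⟩, hY₀, ACtx.diaEmpty_comp.2 ⟨hH₀, hd₀⟩⟩

theorem exists_of_merge (h : ACtxMerge c₁ c₂ c) (hc : ACtx.Marking A B b b' c 𝒞) :
    ∃ 𝒞₁ 𝒞₂, ACtx.Marking A B b b' c₁ 𝒞₁ ∧ ACtx.Marking A B b b' c₂ 𝒞₂ ∧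
      ∀ d₁ ∈ 𝒞₁, ∀ d₂ ∈ 𝒞₂, ∃ d ∈ 𝒞, ACtxMerge d₁ d₂ d := by
  induction h generalizing b 𝒞 with
  | hole h =>
    obtain ⟨hΔ⟩ := hc
    obtain ⟨𝒴₁, 𝒴₂, h₁, h₂, hmerge⟩ := ASeq.Marking.exists_of_merge h hΔ
    refine ⟨_, _, .hole h₁, .hole h₂, ?_⟩
    rintro _ ⟨Y₁, hY₁, rfl⟩ _ ⟨Y₂, hY₂, rfl⟩
    obtain ⟨Y, hY, hYmerge⟩ := hmerge Y₁ hY₁ Y₂ hY₂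
    exact ⟨.hole Y, ⟨Y, hY, rfl⟩, .hole hYmerge⟩
  | nest h _ ih =>
    obtain _ | ⟨hE, hΔ, hc⟩ := hc
    obtain ⟨𝒴₁, 𝒴₂, hΔ₁, hΔ₂, hmergeΔ⟩ := ASeq.Marking.exists_of_merge h hΔ
    obtain ⟨𝒞₁, 𝒞₂, hc₁, hc₂, hmergec⟩ := ih hc
    refine ⟨_, _, .nest hE hΔ₁ hc₁, .nest hE hΔ₂ hc₂, ?_⟩
    rintro _ ⟨H₁, hH₁, Y₁, hY₁, d₁, hd₁, rfl⟩ _ ⟨H₂, hH₂, Y₂, hY₂, d₂, hd₂, rfl⟩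
    obtain ⟨H, hH, hHmerge⟩ := hE.exists_merge hH₁ hH₂
    obtain ⟨Y, hY, hYmerge⟩ := hmergeΔ Y₁ hY₁ Y₂ hY₂
    obtain ⟨d, hd, hdmerge⟩ := hmergec d₁ hd₁ d₂ hd₂
    exact ⟨_, ⟨H, hH, Y, hY, d, hd, rfl⟩, .nest hYmerge ((ACtxMerge.hole hHmerge).comp hdmerge)⟩

theorem exists_fill (hc : ACtx.Marking A B b b' c 𝒞) (hΓ : ASeq.Marking A B b' Γ 𝒴) :
    ∃ 𝒳, ASeq.Marking A B b (c.fill Γ) 𝒳 ∧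
      ∀ X ∈ 𝒳, ∃ c' ∈ 𝒞, ∃ Y ∈ 𝒴, AEquiv X (c'.fill Y) := by
  induction c generalizing b 𝒞 with
  | hole Δ =>
    obtain ⟨hΔ⟩ := hc
    refine ⟨_, hΔ.append hΓ, ?_⟩
    rintro _ ⟨Z, hZ, Y, hY, rfl⟩
    exact ⟨_, ⟨Z, hZ, rfl⟩, Y, hY, .refl _⟩
  | nest E Δ c ih =>
    obtain _ | ⟨hE, hΔ, hc⟩ := hc
    obtain ⟨𝒳, hfill, h⟩ := ih hc
    refine ⟨_, .cons (.nest hE hfill) hΔ, ?_⟩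
    rintro _ ⟨_, ⟨H, hH, X, hX, rfl⟩, Z, hZ, rfl⟩
    obtain ⟨d, hd, Y, hY, hXY⟩ := h X hX
    exact ⟨_, ⟨H, hH, Z, hZ, d, hd, rfl⟩, Y, hY,
      .nest E Z ((hXY.append_left H).trans (ACtx.comp_fill (.hole H) d Y).symm)⟩

theorem exists_of_fill (h : ASeq.Marking A B b (c.fill Γ) 𝒳) :
    ∃ b' 𝒞 𝒴, ACtx.Marking A B b b' c 𝒞 ∧ ASeq.Marking A B b' Γ 𝒴 ∧
      ∀ c' ∈ 𝒞, ∀ Y ∈ 𝒴, ∃ X ∈ 𝒳, AEquiv (c'.fill Y) X := by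
  induction c generalizing b 𝒳 with
  | hole Δ =>
    obtain ⟨𝒴₁, 𝒴₂, h₁, h₂, rfl⟩ := ASeq.Marking.exists_append h
    refine ⟨b, _, 𝒴₂, .hole h₁, h₂, ?_⟩
    rintro _ ⟨Z, hZ, rfl⟩ Y hY
    exact ⟨_, ⟨Z, hZ, Y, hY, rfl⟩, .refl _⟩
  | nest E Δ c ih =>
    obtain _ | ⟨he, hΔ⟩ := h
    cases he with
    | nest hE hfill =>
      obtain ⟨b', 𝒞, 𝒴, hc, hΓ, h⟩ := ih hfill
      refine ⟨b', _, 𝒴, .nest hE hΔ hc, hΓ, ?_⟩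
      rintro _ ⟨H, hH, Z, hZ, d, hd, rfl⟩ Y hY
      obtain ⟨X, hX, hXY⟩ := h d hd Y hY
      exact ⟨_, ⟨_, ⟨H, hH, X, hX, rfl⟩, Z, hZ, rfl⟩,
        .nest E Z ((ACtx.comp_fill (.hole H) d Y).trans (hXY.append_left H))⟩

theorem exists_fill_dia_negate (hc : ACtx.Marking A B false true c 𝒞) {c' : ACtx} (hc' : c' ∈ 𝒞) :
    ∃ (d e : ACtx) (s : Finset Formula),
      (∀ Γ, AEquiv (c'.fill Γ) (d.fill (e.fill Γ ++ [.dia B.negate s]))) ∧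
      ∀ t, ∃ c'' ∈ 𝒞, ∀ Γ, AEquiv (c''.fill Γ) (d.fill (e.fill Γ ++ [.dia B.negate t])) := by
  induction c generalizing 𝒞 c' with
  | hole Δ => cases hc
  | nest E Δ c ih =>
    obtain _ | ⟨hE, hΔ, hc⟩ := hc
    obtain ⟨H, hH, Y, hY, c₀, hc₀, rfl⟩ := hc'
    cases hE with
    | plain hE =>
      obtain ⟨d, e, s, hs, h⟩ := ih hc hc₀
      refine ⟨.nest E Y d, e, s, fun Γ => ?_, fun t => ?_⟩
      · cases hH
        exact .nest E Y ((ACtx.comp_fill (.hole []) c₀ Γ).trans (hs Γ))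
      · obtain ⟨c₁, hc₁, ht⟩ := h t
        exact ⟨_, ⟨[], rfl, Y, hY, c₁, hc₁, rfl⟩, fun Γ =>
          .nest E Y ((ACtx.comp_fill (.hole []) c₁ Γ).trans (ht Γ))⟩
    | enter =>
      obtain ⟨s, rfl⟩ := hH
      exact ⟨.nest E Y (.hole []), c₀, s, fun Γ => .nest E Y (ACtx.hole_comp_fill c₀ Γ _), fun t =>
        ⟨_, ⟨_, ⟨t, rfl⟩, Y, hY, c₀, hc₀, rfl⟩, fun Γ => .nest E Y (ACtx.hole_comp_fill c₀ Γ _)⟩⟩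

theorem exists_fill_equiv (c : ACtx) :
    ∃ 𝒞, ACtx.Marking A B false false c 𝒞 ∧ ∀ c' ∈ 𝒞, ∀ Γ, AEquiv (c'.fill Γ) (c.fill Γ) := by
  induction c with
  | hole Δ =>
    refine ⟨_, .hole (.singleton_of_noBr (by simp)), ?_⟩
    simpa using fun Γ => .refl _
  | nest E Δ c ih =>
    obtain ⟨𝒞, hc, h⟩ := ih
    refine ⟨_, .nest (.plain (by simp)) (.singleton_of_noBr (by simp)) hc, ?_⟩
    rintro _ ⟨_, rfl, _, rfl, c', hc', rfl⟩ Γ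
    exact .nest E _ ((ACtx.comp_fill (.hole []) c' Γ).trans (h c' hc' Γ))

end ACtx.Marking

/-- The elimination of `B` succeeds for `X`, whichever marking is chosen: the set it determines
contains a derivable sequent. -/
def Rewritable (A B : Formula) (P : Formula → Prop) (X : ASeq) : Prop :=
  ∀ 𝒳, ASeq.Marking A B false X 𝒳 → ∃ Y ∈ 𝒳, ADeriv P Y

namespace Rewritable

variable {P : Formula → Prop} {c d c₁ c₂ : ACtx} {Γ Δ : ASeq} {F G : Formula}
  {s t : Finset Formula} {𝒞 : Set ACtx}

theorem fill_iff : Rewritable A B P (c.fill Γ) ↔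
    ∀ b 𝒞 𝒴, ACtx.Marking A B false b c 𝒞 → ASeq.Marking A B b Γ 𝒴 →
      ∃ c' ∈ 𝒞, ∃ Y ∈ 𝒴, ADeriv P (c'.fill Y) := by
  constructor
  · intro h b 𝒞 𝒴 hc hΓ
    obtain ⟨𝒳, h𝒳, hfill⟩ := hc.exists_fill hΓ
    obtain ⟨X, hX, hderiv⟩ := h 𝒳 h𝒳
    obtain ⟨c', hc', Y, hY, hXY⟩ := hfill X hX
    exact ⟨c', hc', Y, hY, .exch hXY hderiv⟩
  · intro h 𝒳 h𝒳
    obtain ⟨b, 𝒞, 𝒴, hc, hΓ, hfill⟩ := ACtx.Marking.exists_of_fill h𝒳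
    obtain ⟨c', hc', Y, hY, hderiv⟩ := h b 𝒞 𝒴 hc hΓ
    obtain ⟨X, hX, hXY⟩ := hfill c' hc' Y hY
    exact ⟨X, hX, .exch hXY hderiv⟩

theorem fill_fill_append_iff : Rewritable A B P (c.fill (d.fill Γ ++ Δ)) ↔
    ∀ b b' 𝒞 𝒟 𝒴 𝒵, ACtx.Marking A B false b c 𝒞 → ACtx.Marking A B b b' d 𝒟 →
      ASeq.Marking A B b' Γ 𝒴 → ASeq.Marking A B b Δ 𝒵 →
      ∃ c' ∈ 𝒞, ∃ d' ∈ 𝒟, ∃ Y ∈ 𝒴, ∃ Z ∈ 𝒵, ADeriv P (c'.fill (d'.fill Y ++ Z)) := by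
  rw [fill_iff]
  constructor
  · intro h b b' 𝒞 𝒟 𝒴 𝒵 hc hd hΓ hΔ
    obtain ⟨𝒳, h𝒳, hfill⟩ := hd.exists_fill hΓ
    obtain ⟨c', hc', _, ⟨X, hX, Z, hZ, rfl⟩, hderiv⟩ := h b 𝒞 _ hc (h𝒳.append hΔ)
    obtain ⟨d', hd', Y, hY, hXY⟩ := hfill X hX
    exact ⟨c', hc', d', hd', Y, hY, Z, hZ, .exch (.fill c' (hXY.append_right Z)) hderiv⟩
  · intro h b 𝒞 _ hc h𝒳
    obtain ⟨𝒳, 𝒵, hfillΓ, hΔ, rfl⟩ := ASeq.Marking.exists_append h𝒳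
    obtain ⟨b', 𝒟, 𝒴, hd, hΓ, hfill⟩ := ACtx.Marking.exists_of_fill hfillΓ
    obtain ⟨c', hc', d', hd', Y, hY, Z, hZ, hderiv⟩ := h b b' 𝒞 𝒟 𝒴 𝒵 hc hd hΓ hΔ
    obtain ⟨X, hX, hXY⟩ := hfill d' hd' Y hY
    exact ⟨c', hc', _, ⟨X, hX, Z, hZ, rfl⟩, .exch (.fill c' (hXY.append_right Z)) hderiv⟩

theorem exch (h : AEquiv Γ Δ) (hΓ : Rewritable A B P Γ) : Rewritable A B P Δ := fun _ hΔ => by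
  obtain ⟨𝒳, h𝒳, hXY⟩ := ASeq.Marking.exists_of_equiv h hΔ
  obtain ⟨X, hX, hderiv⟩ := hΓ 𝒳 h𝒳
  obtain ⟨Y, hY, hXY⟩ := hXY X hX
  exact ⟨Y, hY, .exch hXY hderiv⟩

theorem id {a : ℕ} (h : ASeq.diaEmpty (c.fill [.fml (.pos a), .fml (.neg a)])) :
    Rewritable A B P (c.fill [.fml (.pos a), .fml (.neg a)]) :=
  fill_iff.2 fun _ _ _ hc hΓ => by
    obtain _ | ⟨⟨⟩, _ | ⟨⟨⟩, ⟨⟩⟩⟩ := hΓ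
    obtain ⟨c', hc', hempty⟩ := hc.exists_diaEmpty (ACtx.diaEmpty_fill.1 h).1
    exact ⟨c', hc', _, ⟨_, rfl, _, ⟨_, rfl, _, rfl, rfl⟩, rfl⟩,
      .id (ACtx.diaEmpty_fill.2 ⟨hempty, trivial, trivial, trivial⟩)⟩

theorem exists_of_merge (hmerge : ACtxMerge c₁ c₂ c)
    (hF : Rewritable A B P (c₁.fill [emb F s])) (hG : Rewritable A B P (c₂.fill [emb G t]))
    (hc : ACtx.Marking A B false b c 𝒞) :
    ∃ c' ∈ 𝒞, ∃ c₁' c₂', ACtxMerge c₁' c₂' c' ∧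
      ADeriv P (c₁'.fill [emb F s]) ∧ ADeriv P (c₂'.fill [emb G t]) := by
  obtain ⟨𝒞₁, 𝒞₂, h₁, h₂, h⟩ := ACtx.Marking.exists_of_merge hmerge hc
  obtain ⟨c₁', hc₁', _, rfl, hF⟩ := fill_iff.1 hF b 𝒞₁ _ h₁ .emb
  obtain ⟨c₂', hc₂', _, rfl, hG⟩ := fill_iff.1 hG b 𝒞₂ _ h₂ .emb
  obtain ⟨c', hc', hmerge'⟩ := h c₁' hc₁' c₂' hc₂'
  exact ⟨c', hc', c₁', c₂', hmerge', hF, hG⟩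

theorem and (hmerge : ACtxMerge c₁ c₂ c) (hF : Rewritable A B P (c₁.fill [emb F s]))
    (hG : Rewritable A B P (c₂.fill [emb G t])) : Rewritable A B P (c.fill [.fml (.and F G)]) :=
  fill_iff.2 fun _ _ _ hc hΓ => by
    obtain ⟨c', hc', c₁', c₂', hmerge, hF, hG⟩ := exists_of_merge hmerge hF hG hc
    exact ⟨c', hc', _, hΓ.eq_singleton_of_fml ▸ rfl, .and hmerge hF hG⟩

theorem cut (hF : P F) (hmerge : ACtxMerge c₁ c₂ c) (h₁ : Rewritable A B P (c₁.fill [emb F s]))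
    (h₂ : Rewritable A B P (c₂.fill [emb F.negate t])) : Rewritable A B P (c.fill []) :=
  fill_iff.2 fun _ _ _ hc hΓ => by
    obtain ⟨c', hc', c₁', c₂', hmerge, h₁, h₂⟩ := exists_of_merge hmerge h₁ h₂ hc
    cases hΓ
    exact ⟨c', hc', [], rfl, .cut hF hmerge h₁ h₂⟩

theorem or (h : Rewritable A B P (c.fill [emb F s, emb G t])) :
    Rewritable A B P (c.fill [.fml (.or F G)]) :=
  fill_iff.2 fun b 𝒞 _ hc hΓ => by
    obtain ⟨c', hc', Y, hY, h⟩ := fill_iff.1 h b 𝒞 _ hc (.cons .emb .emb)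
    obtain ⟨_, rfl, _, rfl, rfl⟩ := hY
    exact ⟨c', hc', _, hΓ.eq_singleton_of_fml ▸ rfl, .or h⟩

theorem box (hA : P A) {S : Finset Formula}
    (h : Rewritable A B P (c.fill [.nest F [.dia F.negate S, emb F s]])) :
    Rewritable A B P (c.fill [.fml (.box F)]) :=
  fill_iff.2 fun b 𝒞 _ hc hΓ => by
    have hprem {b' : Bool} {ℋ : Set ASeq} (hF : BracketFrame A B b b' F ℋ) :
        ∃ c' ∈ 𝒞, ∃ H ∈ ℋ, ADeriv P (c'.fill [.nest F (H ++ [.dia F.negate S, emb F s])]) := by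
      obtain ⟨c', hc', _, ⟨_, ⟨H, hH, _, ⟨_, rfl, _, rfl, rfl⟩, rfl⟩, _, rfl, rfl⟩, h⟩ :=
        fill_iff.1 h b 𝒞 _ hc (.cons (.nest hF (.cons .dia .emb)) .nil)
      exact ⟨c', hc', H, hH, h⟩
    rw [hΓ.eq_singleton_of_fml]
    by_cases hb : b = true → F ≠ B
    · obtain ⟨c', hc', _, rfl, h⟩ := hprem (.plain hb)
      exact ⟨c', hc', _, rfl, .box h⟩
    · obtain ⟨rfl, rfl⟩ : b = true ∧ F = B := by simpa using hb
      obtain ⟨c', hc', _, ⟨t, rfl⟩, h⟩ := hprem .pad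
      obtain ⟨d, e, r, hsplit, hfresh⟩ := hc.exists_fill_dia_negate hc'
      obtain ⟨r', hbox⟩ := ADeriv.exists_box_of_nest_negate hA (.exch (hsplit _) h)
      obtain ⟨c'', hc'', hsplit'⟩ := hfresh r'
      exact ⟨c'', hc'', _, rfl, .exch (hsplit' _).symm hbox⟩

theorem dia (hA : P A) {S : Finset Formula} {E : Formula}
    (h : Rewritable A B P (c.fill (d.fill [.nest E (emb F s :: Γ)] ++ [.dia F S]))) :
    Rewritable A B P (c.fill (d.fill [.nest E Γ] ++ [.dia F (insert E S)])) :=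
  fill_fill_append_iff.2 fun b b' 𝒞 𝒟 _ _ hc hd hE hF => by
    obtain _ | ⟨hE, ⟨⟩⟩ := hE
    obtain _ | ⟨hF, ⟨⟩⟩ := hF
    obtain _ | _ | _ | ⟨hE, hΓ⟩ := hE
    have hprem {𝓎 : Set AElem} (h𝓎 : AElem.Marking A B b (.dia F S) 𝓎) :=
      fill_fill_append_iff.1 h b b' 𝒞 𝒟 _ _ hc hd (.cons (.nest hE (.cons .emb hΓ)) .nil)
        (.cons h𝓎 .nil)
    cases hF with
    | dia =>
      obtain ⟨c', hc', d', hd', _, ⟨_, ⟨H, hH, _, ⟨_, rfl, Y, hY, rfl⟩, rfl⟩, _, rfl, rfl⟩, _,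
        ⟨_, rfl, _, rfl, rfl⟩, h⟩ := hprem .dia
      exact ⟨c', hc', d', hd', _, ⟨_, ⟨H, hH, Y, hY, rfl⟩, _, rfl, rfl⟩, _,
        ⟨_, rfl, _, rfl, rfl⟩, h.dia_middle⟩
    | mark =>
      obtain rfl := hd.hole_eq_true
      obtain ⟨c', hc', d', hd', _, ⟨_, ⟨H, hH, _, ⟨_, rfl, Y, hY, rfl⟩, rfl⟩, _, rfl, rfl⟩, _,
        ⟨_, ⟨T, hT, rfl⟩, _, rfl, rfl⟩, h⟩ := hprem .mark
      obtain ⟨H', hH', T', hT', h⟩ := hE.exists_dia_mark hA hH hT h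
      exact ⟨c', hc', d', hd', _, ⟨_, ⟨H', hH', Y, hY, rfl⟩, _, rfl, rfl⟩, _,
        ⟨_, ⟨T', hT', rfl⟩, _, rfl, rfl⟩, h⟩

end Rewritable

theorem ADeriv.rewritable {P : Formula → Prop} (hA : P A) {X : ASeq} (h : ADeriv P X) :
    Rewritable A B P X := by
  induction h with
  | id h => exact .id h
  | and hc _ _ ihF ihG => exact .and hc ihF ihG
  | or _ ih => exact .or ih
  | box _ ih => exact .box hA ih
  | dia _ ih => exact .dia hA ih
  | cut hF hc _ _ ih₁ ih₂ => exact .cut hF hc ih₁ ih₂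
  | exch hequiv _ ih => exact .exch hequiv ih

end Marking

theorem diag_elim_first_step_general {P : Formula → Prop} {A : Formula} (hA : P A) (B C : Formula)
    (S : Finset Formula) (Δ : ASeq) (c : ACtx) (hno : ASeq.noBr B Δ)
    (h : ADeriv P (c.fill [.nest C (.dia A.negate S :: Δ)])) :
    ∃ S' ⊆ S \ {B}, ∃ s : Finset Formula,
      ADeriv P (c.fill [.nest C (.dia A.negate S' :: .dia B.negate s :: Δ)]) := by
  obtain ⟨𝒞, hc, hequiv⟩ := ACtx.Marking.exists_fill_equiv (A := A) (B := B) c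
  obtain ⟨c', hc', _, ⟨_, ⟨_, ⟨s, rfl⟩, _, ⟨_, ⟨T, hT, rfl⟩, _, rfl, rfl⟩, rfl⟩, _, rfl, rfl⟩, h⟩ :=
    Rewritable.fill_iff.1 (h.rewritable hA) false 𝒞 _ hc
      (.cons (.nest .enter (.cons .mark (.singleton_of_noBr fun _ => hno))) .nil)
  exact ⟨T, hT, s, .exch ((hequiv c' hc' _).trans (.fill c (.nest C [] (.swap _ _ _)))) h⟩

/-- first step of diagonal-formula elimination. -/
theorem diag_elim_first_step (A B C : Formula) (S : Finset Formula)
    (Δ : ASeq) (c : ACtx)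
    (hB : B ∈ S) (hno : ASeq.noBr B Δ)
    (h : ADeriv (· = A) (c.fill [.nest C (.dia A.negate S :: Δ)])) :
    ∃ S' ⊆ S \ {B}, ∃ s : Finset Formula,
      ADeriv (· = A)
        (c.fill [.nest C (.dia A.negate S' :: .dia B.negate s :: Δ)]) :=
  diag_elim_first_step_general (P := (· = A)) rfl B C S Δ c hno h
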